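/- Let s ∈ 𝕆 with ‖s‖ = 1, s·(s·s) = 1 and s ≠ 1. Then the intersection of the sets {(x, x̄) : x ∈ 𝕆, ‖x‖ = 1, x·(x·x) = 1} and {(s·u, s̄·ū) : u ∈ 𝕆, ‖u‖ = 1, u·(u·u) = 1} in 𝕆 × 𝕆 equals {(1,1), (s, s̄), (s̄, s)}. (This identifies the maximal antipodal set through o = (1,1) in the outer 3-symmetric space S⁷ × S⁷ = Spin₈/G₂ as a 3-point set, on which the outer involution σ fixes (1,1) and interchanges the other two points.) -/

import Mathlib

noncomputable section

/-- The octonions as the Cayley–Dickson double of the quaternions. -/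
abbrev Oct : Type := Quaternion ℝ × Quaternion ℝ

namespace Oct

/-- Cayley–Dickson multiplication: (a,b)·(c,d) = (ac − d̄b, da + bc̄). -/
def mul (x y : Oct) : Oct :=
  (x.1 * y.1 - star y.2 * x.2, y.2 * x.1 + x.2 * star y.1)

/-- The unit 1 = (1,0). -/
def one : Oct := (1, 0)

/-- Octonionic conjugation κ(a,b) = (ā, −b). -/
def conj (x : Oct) : Oct := (star x.1, -x.2)

/-- The squared Euclidean norm ‖(a,b)‖² = ‖a‖² + ‖b‖². -/
def normSq (x : Oct) : ℝ := ‖x.1‖ ^ 2 + ‖x.2‖ ^ 2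

/-- Left multiplication L(s) : y ↦ s·y. -/
def L (s : Oct) : Oct → Oct := fun y => mul s y

/-- A linear automorphism of 𝕆 is an isometry if it preserves the Euclidean norm. -/
def IsIsometry (A : Oct ≃ₗ[ℝ] Oct) : Prop := ∀ x, normSq (A x) = normSq x

/-- A triality triple: ℝ-linear isometric bijections with B(x·y) = (Cx)·(Ay). -/
def IsTriality (A B C : Oct ≃ₗ[ℝ] Oct) : Prop :=
  IsIsometry A ∧ IsIsometry B ∧ IsIsometry C ∧
    ∀ x y : Oct, B (mul x y) = mul (C x) (A y)

/-- Octonionic conjugation κ as an ℝ-linear equivalence. -/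
def kappa : Oct ≃ₗ[ℝ] Oct where
  toFun := conj
  invFun := conj
  left_inv := fun x => by simp [conj]
  right_inv := fun x => by simp [conj]
  map_add' := fun x y => by simp [conj, Prod.ext_iff, star_add, neg_add, add_comm]
  map_smul' := fun r x => by simp [conj, Prod.ext_iff]

/-- D ↦ κ∘D∘κ. -/
def conjOp (D : Oct ≃ₗ[ℝ] Oct) : Oct ≃ₗ[ℝ] Oct := kappa.trans (D.trans kappa)

/-- Triples of ℝ-linear bijections of 𝕆. -/
abbrev Triple := (Oct ≃ₗ[ℝ] Oct) × (Oct ≃ₗ[ℝ] Oct) × (Oct ≃ₗ[ℝ] Oct)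

/-- The triality map τ(A,B,C) = (κBκ, κCκ, A). -/
def tauMap (T : Triple) : Triple := (conjOp T.2.1, conjOp T.2.2, T.1)

/-- The outer involution σ(A,B,C) = (B, A, κCκ). -/
def sigmaMap (T : Triple) : Triple := (T.2.1, T.1, conjOp T.2.2)

/-- The induced map on S⁷ × S⁷: t(x,y) = (ȳ, x·ȳ). -/
def tS (p : Oct × Oct) : Oct × Oct := (conj p.2, mul p.1 (conj p.2))

/-- The swap s(x,y) = (y,x). -/
def swap (p : Oct × Oct) : Oct × Oct := (p.2, p.1)

end Oct

open Oct

theorem oct_ext (x y : Oct) (h0 : x.1.re = y.1.re) (h1 : x.1.imI = y.1.imI)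
    (h2 : x.1.imJ = y.1.imJ) (h3 : x.1.imK = y.1.imK) (h4 : x.2.re = y.2.re)
    (h5 : x.2.imI = y.2.imI) (h6 : x.2.imJ = y.2.imJ) (h7 : x.2.imK = y.2.imK) : x = y :=
  Prod.ext (QuaternionAlgebra.ext h0 h1 h2 h3) (QuaternionAlgebra.ext h4 h5 h6 h7)

def imSq (x : Oct) : ℝ := x.1.imI ^ 2 + x.1.imJ ^ 2 + x.1.imK ^ 2 + x.2.re ^ 2
  + x.2.imI ^ 2 + x.2.imJ ^ 2 + x.2.imK ^ 2

theorem normSq_coord (x : Oct) : normSq x = x.1.re ^ 2 + imSq x := by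
  have h (q : Quaternion ℝ) : ‖q‖ ^ 2 = q.re ^ 2 + q.imI ^ 2 + q.imJ ^ 2 + q.imK ^ 2 := by
    rw [sq, ← Quaternion.normSq_eq_norm_mul_self, Quaternion.normSq_def']
  rw [normSq, h, h, imSq]; ring

theorem sq7 {a b c d e f g : ℝ}
    (h : a ^ 2 + b ^ 2 + c ^ 2 + d ^ 2 + e ^ 2 + f ^ 2 + g ^ 2 = 0) :
    a = 0 ∧ b = 0 ∧ c = 0 ∧ d = 0 ∧ e = 0 ∧ f = 0 ∧ g = 0 := by
  refine ⟨?_, ?_, ?_, ?_, ?_, ?_, ?_⟩ <;> (apply pow_eq_zero_iff (two_ne_zero) |>.1; nlinarith [sq_nonneg a, sq_nonneg b, sq_nonneg c, sq_nonneg d, sq_nonneg e, sq_nonneg f, sq_nonneg g])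

theorem re_cube (x : Oct) :
    (mul x (mul x x)).1.re = x.1.re ^ 3 - 3 * x.1.re * imSq x := by
  simp [mul, imSq]; ring

theorem root_cases (x : Oct) (hn : normSq x = 1) (hc : mul x (mul x x) = one) :
    x = one ∨ (x.1.re = -1/2 ∧ imSq x = 3/4) := by
  rw [normSq_coord] at hn
  have h := re_cube x
  rw [hc] at h
  have hone : (one : Oct).1.re = 1 := rfl
  rw [hone] at h
  have hi : imSq x = 1 - x.1.re ^ 2 := by linarith
  rw [hi] at h
  have h2 : (x.1.re - 1) * (2 * x.1.re + 1) ^ 2 = 0 := by linarith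
  rcases mul_eq_zero.1 h2 with h3 | h3
  · left
    have h4 : x.1.re = 1 := by linarith
    rw [h4] at hi
    have h5 : imSq x = 0 := by linarith
    obtain ⟨a, b, c, d, e, f, g⟩ := sq7 h5
    apply oct_ext <;> simp only [one, a, b, c, d, e, f, g, h4] <;> rfl
  · right
    have h4 : x.1.re = -1/2 := by
      have := pow_eq_zero_iff (two_ne_zero) |>.1 h3
      linarith
    refine ⟨h4, ?_⟩
    rw [hi, h4]; norm_num

theorem sq_eq_conj (s : Oct) (h : s.1.re = -1/2) (h' : imSq s = 3/4) : mul s s = conj s := by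
  unfold imSq at h'
  apply oct_ext <;> simp [mul, conj, h] <;> linarith

theorem mul_conj_self (s : Oct) (h : normSq s = 1) : mul s (conj s) = one := by
  rw [normSq_coord, imSq] at h
  have e0 : (1 : Quaternion ℝ).re = 1 := rfl
  have e1 : (1 : Quaternion ℝ).imI = 0 := rfl
  have e2 : (1 : Quaternion ℝ).imJ = 0 := rfl
  have e3 : (1 : Quaternion ℝ).imK = 0 := rfl
  have f0 : (0 : Quaternion ℝ).re = 0 := rfl
  have f1 : (0 : Quaternion ℝ).imI = 0 := rfl
  have f2 : (0 : Quaternion ℝ).imJ = 0 := rfl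
  have f3 : (0 : Quaternion ℝ).imK = 0 := rfl
  apply oct_ext <;> simp [mul, conj, one, e0, e1, e2, e3] <;> linarith

theorem oconj_conj (s : Oct) : conj (conj s) = s := by simp [conj]

theorem normSq_conj (s : Oct) : normSq (conj s) = normSq s := by simp [conj, normSq]

theorem oconj_mul (x y : Oct) : conj (mul x y) = mul (conj y) (conj x) := by
  apply oct_ext <;> simp [mul, conj] <;> ring

theorem mul_one' (x : Oct) : mul x one = x := by simp [mul, one]

theorem conj_one : conj one = one := by simp [conj, one]

theorem one_root : normSq one = 1 ∧ mul one (mul one one) = one := by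
  refine ⟨?_, by rw [mul_one', mul_one']⟩
  simp [normSq, one]

def ip (x y : Oct) : ℝ := x.1.imI * y.1.imI + x.1.imJ * y.1.imJ + x.1.imK * y.1.imK
  + x.2.re * y.2.re + x.2.imI * y.2.imI + x.2.imJ * y.2.imJ + x.2.imK * y.2.imK

theorem comm_identity (x y : Oct) :
    imSq (mul x y - mul y x) = 4 * (imSq x * imSq y - ip x y ^ 2) := by
  simp [mul, imSq, ip]; ring

theorem comm_cases (s u : Oct) (hs : s.1.re = -1/2) (hs' : imSq s = 3/4)
    (hu : u.1.re = -1/2) (hu' : imSq u = 3/4) (h : mul s u = mul u s) :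
    u = s ∨ u = conj s := by
  have h1 := comm_identity s u
  rw [h, sub_self, hs', hu'] at h1
  have h0 : imSq 0 = 0 := by
    have : imSq 0 = (0:ℝ)^2+(0:ℝ)^2+(0:ℝ)^2+(0:ℝ)^2+(0:ℝ)^2+(0:ℝ)^2+(0:ℝ)^2 := rfl
    rw [this]; norm_num
  rw [h0] at h1
  have h2 : (ip s u - 3/4) * (ip s u + 3/4) = 0 := by linarith
  rcases mul_eq_zero.1 h2 with h3 | h3
  · left
    have h4 : imSq (u - s) = 0 := by
      have : imSq (u - s) = imSq u + imSq s - 2 * ip s u := by simp [imSq, ip]; ring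
      rw [this]; linarith
    obtain ⟨a, b, c, d, e, f, g⟩ := sq7 h4
    simp at a b c d e f g
    apply oct_ext <;> linarith
  · right
    have h4 : imSq (u + s) = 0 := by
      have : imSq (u + s) = imSq u + imSq s + 2 * ip s u := by simp [imSq, ip]; ring
      rw [this]; linarith
    obtain ⟨a, b, c, d, e, f, g⟩ := sq7 h4
    simp at a b c d e f g
    apply oct_ext <;> simp [conj] <;> linarith

/-- for a nontrivial unit cube root of unity s, the intersection
Fix(Γ) ∩ g·Fix(Γ) (with g = (L(s), L(s̄))) equals {(1,1), (s,s̄), (s̄,s)}: the maximal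
antipodal set through o = (1,1) of the outer 3-symmetric space S⁷×S⁷ = Spin₈/G₂. -/
theorem maximal_antipodal_set (s : Oct) (hs : normSq s = 1)
    (hcube : mul s (mul s s) = one) (hs1 : s ≠ one) :
    {p : Oct × Oct | ∃ x : Oct, normSq x = 1 ∧ mul x (mul x x) = one ∧ p = (x, conj x)}
      ∩ {p : Oct × Oct | ∃ u : Oct, normSq u = 1 ∧ mul u (mul u u) = one
          ∧ p = (mul s u, mul (conj s) (conj u))}
    = {((one : Oct), (one : Oct)), (s, conj s), (conj s, s)} := by
  obtain ⟨hr, hi⟩ := (root_cases s hs hcube).resolve_left hs1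
  have hsq := sq_eq_conj s hr hi
  have hsc := mul_conj_self s hs
  have hcn : normSq (conj s) = 1 := by rw [normSq_conj, hs]
  have hcs : mul (conj s) s = one := by
    have := mul_conj_self (conj s) hcn
    rwa [oconj_conj] at this
  have hcsq : mul (conj s) (conj s) = s := by
    rw [← oconj_mul, hsq, oconj_conj]
  have hcc : mul (conj s) (mul (conj s) (conj s)) = one := by rw [hcsq, hcs]
  ext p
  simp only [Set.mem_inter_iff, Set.mem_setOf_eq, Set.mem_insert_iff, Set.mem_singleton_iff]
  constructor
  · rintro ⟨⟨x, -, -, rfl⟩, u, hun, huc, hp⟩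
    obtain ⟨hx, hy⟩ := Prod.mk.inj hp
    have hcomm : mul s u = mul u s := by
      rw [hx, oconj_mul] at hy
      have := congrArg conj hy
      rwa [← oconj_mul, ← oconj_mul, oconj_conj, oconj_conj] at this
    rcases root_cases u hun huc with rfl | ⟨h1, h2⟩
    · right; left
      rw [hx, mul_one']
    · rcases comm_cases s u hr hi h1 h2 hcomm with rfl | rfl
      · right; right
        rw [hx, hsq, oconj_conj]
      · left
        rw [hx, hsc, conj_one]
  · rintro (rfl | rfl | rfl)
    · exact ⟨⟨one, one_root.1, one_root.2, by rw [conj_one]⟩,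
        conj s, hcn, hcc, by rw [hsc, oconj_conj, hcs]⟩
    · exact ⟨⟨s, hs, hcube, rfl⟩, one, one_root.1, one_root.2, by rw [conj_one, mul_one', mul_one']⟩
    · exact ⟨⟨conj s, hcn, hcc, by rw [oconj_conj]⟩, s, hs, hcube, by rw [hsq, hcsq]⟩
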